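/- arXiv:math/0412067 — 3 statements merged into one kernel-verified Lean document; each statement's English description precedes it below -/
import Mathlib

section
/- Let q be real with 0 < q < 1 and let z ∈ ℂ with Re(z) > 0. Then, as s → 1 within the half-plane {s ∈ ℂ : Re(s) > 1}, the quantity ζ̃_q(s,z) − (q−1)/((s−1)·log q) tends to γ_q(z) := ∑_{n=1}^{∞} q^{nz}/[n]_q + (1−q)·(−z + 1/2 − log(1−q)/log q). -/
/-!
With `x_n = q^{n+z}`, the `n`-th term of `ζ̃_q(s, z)` is
`(1-q)^s q^{z(s-1)} · (q^{s-1})^n (1 - x_n)^{-s}`, and `(1 - x_n)^{-s} = 1 + ((1 - x_n)^{-s} - 1)`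
splits the series in two. The first part is the geometric series `1 / (1 - q^{s-1})`, which carries
the pole: in the variable `u = (s-1) log q` the prefactor is `(1-q) e^{au}` with
`a = z + log(1-q) / log q`, and `e^{au} / (1 - e^u) = -1/u + 1/2 - a + o(1)`. The second part
converges by domination to `∑ x_n / (1 - x_n)`; expanding each summand as a geometric series in
`x_n` and exchanging the two summations gives `∑_{m ≥ 1} q^{mz} / (1 - q^m)`.
-/

open Complex

/-- `[w]_q = (1 - q^w)/(1 - q)` for real `0 < q < 1` and complex `w`
(principal complex power of the positive real `q`). -/
noncomputable def qNum (q : ℝ) (w : ℂ) : ℂ := (1 - (q : ℂ) ^ w) / (1 - (q : ℂ))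

/-- The `q`-Hurwitz zeta function `ζ̃_q(s,z) = ∑_{n≥0} q^{(n+z)(s−1)}/[n+z]_q^s`. -/
noncomputable def tzetaQ (q : ℝ) (s z : ℂ) : ℂ :=
  ∑' n : ℕ, (q : ℂ) ^ (((n : ℂ) + z) * (s - 1)) / (qNum q ((n : ℂ) + z)) ^ s

/-- `γ_q(z) = ∑_{n=1}^∞ q^{nz}/[n]_q + (1−q)(−z + 1/2 − log(1−q)/log q)`. -/
noncomputable def gammaQz (q : ℝ) (z : ℂ) : ℂ :=
  (∑' n : ℕ, (q : ℂ) ^ (((n : ℕ) + 1 : ℂ) * z) / (((1 - q ^ ((n : ℕ) + 1)) / (1 - q) : ℝ) : ℂ))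
    + ((1 - q : ℝ) : ℂ) * (-z + 1 / 2 - ((Real.log (1 - q) / Real.log q : ℝ) : ℂ))

open Filter Topology

lemma hasDerivAt_dslope_exp_zero : HasDerivAt (dslope exp 0) (1 / 2) 0 := by
  have h_coeff : (NormedSpace.expSeries ℂ ℂ).fslope.coeff 1 = 1 / 2 := by
    simp [NormedSpace.expSeries_eq_ofScalars]
  rw [exp_eq_exp_ℂ, ← h_coeff]
  exact (NormedSpace.exp_hasFPowerSeriesAt_zero (𝕂 := ℂ)).has_fpower_series_dslope_fslope.hasDerivAt

lemma tendsto_exp_mul_div_one_sub_exp_add_inv (a : ℂ) :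
    Tendsto (fun u : ℂ => exp (a * u) / (1 - exp u) + u⁻¹) (𝓝[≠] 0) (𝓝 (1 / 2 - a)) := by
  have h_one : dslope exp 0 0 = 1 := by simp
  have h_exp : HasDerivAt (fun u => exp (a * u)) a 0 := by
    simpa using ((hasDerivAt_id (0 : ℂ)).const_mul a).cexp
  have h_quot : HasDerivAt (fun u => exp (a * u) / dslope exp 0 u) (a - 1 / 2) 0 := by
    simpa [h_one] using h_exp.fun_div hasDerivAt_dslope_exp_zero (by simp)
  -- The function is minus the difference quotient of `e^{au} / ((e^u - 1) / u)` at `0`.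
  rw [← neg_sub]
  refine h_quot.tendsto_slope.neg.congr' ?_
  filter_upwards [self_mem_nhdsWithin] with u hu
  have hu : u ≠ 0 := hu
  rw [slope_def_field, dslope_of_ne _ hu, slope_def_field, h_one, ← neg_sub (exp u) 1, div_neg]
  simp only [mul_zero, exp_zero, sub_zero, div_one, sub_div]
  field_simp
  ring

lemma tendsto_sub_mul_nhdsNE {S : Set ℂ} {s₀ c : ℂ} (hs₀ : s₀ ∉ S) (hc : c ≠ 0) :
    Tendsto (fun s => (s - s₀) * c) (𝓝[S] s₀) (𝓝[≠] 0) := by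
  have h_deriv : HasDerivAt (fun s => (s - s₀) * c) c s₀ := by
    simpa using ((hasDerivAt_id s₀).sub_const s₀).mul_const c
  simpa using (h_deriv.tendsto_nhdsNE hc).mono_left
    (nhdsWithin_mono s₀ (Set.subset_compl_singleton_iff.2 hs₀))

lemma tsum_pow_mul_div_one_sub_pow_mul {𝕜 : Type*} [NormedField 𝕜] [CompleteSpace 𝕜] {q x : 𝕜}
    (hq : ‖q‖ < 1) (hx : ‖x‖ < 1) :
    ∑' n : ℕ, q ^ n * x / (1 - q ^ n * x) = ∑' m : ℕ, x ^ (m + 1) / (1 - q ^ (m + 1)) := by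
  have h_le_one (n : ℕ) : ‖q‖ ^ n ≤ 1 := pow_le_one₀ (norm_nonneg q) hq.le
  have h_geom {y c : 𝕜} (hy : ‖y‖ < 1) : ∑' k : ℕ, y ^ k * c = c / (1 - y) := by
    rw [tsum_mul_right, tsum_geometric_of_norm_lt_one hy, inv_mul_eq_div]
  have h_row (n : ℕ) : ∑' m : ℕ, (q ^ n * x) ^ (m + 1) = q ^ n * x / (1 - q ^ n * x) := by
    simp_rw [pow_succ _]
    refine h_geom ?_
    rw [norm_mul, norm_pow]
    exact (mul_le_of_le_one_left (norm_nonneg x) (h_le_one n)).trans_lt hx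
  have h_col (m : ℕ) : ∑' n : ℕ, (q ^ n * x) ^ (m + 1) = x ^ (m + 1) / (1 - q ^ (m + 1)) := by
    simp_rw [mul_pow, pow_right_comm q _ (m + 1)]
    refine h_geom ?_
    rw [norm_pow]
    exact pow_lt_one₀ (norm_nonneg q) hq m.succ_ne_zero
  have h_summable : Summable (Function.uncurry fun n m : ℕ => (q ^ n * x) ^ (m + 1)) := by
    refine Summable.of_norm_bounded ((summable_geometric_of_lt_one (norm_nonneg q) hq).mul_of_nonneg
      (summable_geometric_of_lt_one (norm_nonneg x) hx) (fun _ => by positivity)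
      (fun _ => by positivity)) fun ⟨n, m⟩ => ?_
    calc ‖(q ^ n * x) ^ (m + 1)‖ = (‖q‖ ^ n) ^ (m + 1) * ‖x‖ ^ (m + 1) := by
          simp only [norm_pow, norm_mul, mul_pow]
      _ ≤ ‖q‖ ^ n * ‖x‖ ^ m := by
          gcongr ?_ * ?_
          · exact pow_le_of_le_one (by positivity) (h_le_one n) m.succ_ne_zero
          · exact pow_le_pow_of_le_one (norm_nonneg x) hx.le m.le_succ
  simp_rw [← h_row, ← h_col]
  exact h_summable.tsum_comm.symm

lemma norm_log_one_sub_le {x : ℂ} (hx : ‖x‖ < 1) : ‖log (1 - x)‖ ≤ ‖x‖ / (1 - ‖x‖) := by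
  have h_pos : 0 < 1 - ‖x‖ := sub_pos.2 hx
  have h := norm_log_one_add_le (z := -x) (by rwa [norm_neg])
  rw [norm_neg, ← sub_eq_add_neg] at h
  refine h.trans ?_
  rw [le_div_iff₀ h_pos]
  field_simp
  nlinarith [sq_nonneg ‖x‖]

lemma norm_one_sub_cpow_sub_one_le {x s : ℂ} {r R : ℝ} (hr : r < 1) (hx : ‖x‖ ≤ r)
    (hs : ‖s‖ ≤ R) :
    ‖(1 - x) ^ s - 1‖ ≤ R / (1 - r) * Real.exp (R / (1 - r)) * ‖x‖ := by
  have hx_lt : ‖x‖ < 1 := hx.trans_lt hr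
  have : 0 < 1 - r := sub_pos.2 hr
  have hR : 0 ≤ R := (norm_nonneg s).trans hs
  have h_ne : 1 - x ≠ 0 := sub_ne_zero.2 (by rintro rfl; simp at hx_lt)
  have h_exponent : ‖log (1 - x) * s‖ ≤ R / (1 - r) * ‖x‖ :=
    calc ‖log (1 - x) * s‖ = ‖log (1 - x)‖ * ‖s‖ := norm_mul _ _
      _ ≤ ‖x‖ / (1 - r) * R := by
          gcongr
          exact (norm_log_one_sub_le hx_lt).trans (by gcongr)
      _ = R / (1 - r) * ‖x‖ := by ring
  rw [cpow_def_of_ne_zero h_ne]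
  calc ‖exp (log (1 - x) * s) - 1‖
      ≤ ‖log (1 - x) * s‖ * Real.exp ‖log (1 - x) * s‖ := by
        simpa using norm_exp_sub_sum_le_norm_mul_exp (log (1 - x) * s) 1
    _ ≤ R / (1 - r) * ‖x‖ * Real.exp (R / (1 - r)) := by
        gcongr
        exact h_exponent.trans (mul_le_of_le_one_right (by positivity) hx_lt.le)
    _ = R / (1 - r) * Real.exp (R / (1 - r)) * ‖x‖ := by ring

lemma one_sub_cpow_neg_one_sub_one {x : ℂ} (hx : x ≠ 1) :
    (1 - x) ^ (-1 : ℂ) - 1 = x / (1 - x) := by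
  have h_ne : 1 - x ≠ 0 := sub_ne_zero.2 hx.symm
  rw [cpow_neg_one]
  field_simp
  ring

section InfiniteSums

variable {ι : Type*} {x : ι → ℂ} {r B : ℝ}

lemma summable_mul_one_sub_cpow_sub_one {c : ι → ℂ} (s : ℂ) (hx : Summable x) (hr : r < 1)
    (hxr : ∀ i, ‖x i‖ ≤ r) (hc : ∀ i, ‖c i‖ ≤ B) :
    Summable fun i => c i * ((1 - x i) ^ s - 1) := by
  refine Summable.of_norm_bounded
    ((hx.norm.mul_left (‖s‖ / (1 - r) * Real.exp (‖s‖ / (1 - r)))).mul_left B) fun i => ?_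
  have hB : 0 ≤ B := (norm_nonneg _).trans (hc i)
  rw [norm_mul]
  exact mul_le_mul (hc i) (norm_one_sub_cpow_sub_one_le hr (hxr i) le_rfl) (norm_nonneg _) hB

lemma tendsto_tsum_mul_one_sub_cpow_sub_one {α : Type*} {l : Filter α} {c : α → ι → ℂ}
    {c₀ : ι → ℂ} {s : α → ℂ} {s₀ : ℂ} (hx : Summable x) (hr : r < 1) (hxr : ∀ i, ‖x i‖ ≤ r)
    (hs : Tendsto s l (𝓝 s₀)) (hc : ∀ i, Tendsto (c · i) l (𝓝 (c₀ i)))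
    (hcB : ∀ᶠ a in l, ∀ i, ‖c a i‖ ≤ B) :
    Tendsto (fun a => ∑' i, c a i * ((1 - x i) ^ s a - 1)) l
      (𝓝 (∑' i, c₀ i * ((1 - x i) ^ s₀ - 1))) := by
  have h_ne (i : ι) : 1 - x i ≠ 0 :=
    sub_ne_zero.2 fun h => by simpa [← h] using (hxr i).trans_lt hr
  have hs_bound : ∀ᶠ a in l, ‖s a‖ ≤ ‖s₀‖ + 1 :=
    (hs.norm.eventually_lt_const (lt_add_one _)).mono fun _ => le_of_lt
  refine tendsto_tsum_of_dominated_convergence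
    ((hx.norm.mul_left ((‖s₀‖ + 1) / (1 - r) * Real.exp ((‖s₀‖ + 1) / (1 - r)))).mul_left B)
    (fun i => (hc i).mul ((hs.const_cpow (Or.inl (h_ne i))).sub_const 1)) ?_
  filter_upwards [hcB, hs_bound] with a ha hsa i
  have hB : 0 ≤ B := (norm_nonneg _).trans (ha i)
  rw [norm_mul]
  exact mul_le_mul (ha i) (norm_one_sub_cpow_sub_one_le hr (hxr i) hsa) (norm_nonneg _) hB

end InfiniteSums

lemma norm_ofReal_cpow_lt_one {q : ℝ} (hq0 : 0 < q) (hq1 : q < 1) {w : ℂ} (hw : 0 < w.re) :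
    ‖(q : ℂ) ^ w‖ < 1 := by
  rw [norm_cpow_eq_rpow_re_of_pos hq0]
  exact Real.rpow_lt_one hq0.le hq1 hw

lemma cpow_natCast_add {a : ℂ} (ha : a ≠ 0) (n : ℕ) (z : ℂ) :
    a ^ ((n : ℂ) + z) = a ^ n * a ^ z := by
  rw [cpow_add _ _ ha, cpow_natCast]

lemma summable_cpow_natCast_add {a : ℂ} (ha : ‖a‖ < 1) (ha0 : a ≠ 0) (z : ℂ) :
    Summable fun n : ℕ => a ^ ((n : ℂ) + z) := by
  simp_rw [cpow_natCast_add ha0]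
  exact (summable_geometric_of_norm_lt_one ha).mul_right _

lemma norm_cpow_natCast_add_le {a : ℂ} (ha : ‖a‖ ≤ 1) (ha0 : a ≠ 0) (n : ℕ) (z : ℂ) :
    ‖a ^ ((n : ℂ) + z)‖ ≤ ‖a ^ z‖ := by
  rw [cpow_natCast_add ha0, norm_mul, norm_pow]
  exact mul_le_of_le_one_left (norm_nonneg _) (pow_le_one₀ (norm_nonneg a) ha)

lemma div_ofReal_cpow {c : ℝ} (hc : 0 < c) (w s : ℂ) : (w / c) ^ s = w ^ s / (c : ℂ) ^ s := by
  rcases eq_or_ne s 0 with rfl | hs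
  · simp
  rcases eq_or_ne w 0 with rfl | hw
  · simp [zero_cpow hs]
  have hc_ne : (c : ℂ) ≠ 0 := ofReal_ne_zero.2 hc.ne'
  rw [cpow_def_of_ne_zero (div_ne_zero hw hc_ne), cpow_def_of_ne_zero hw,
    cpow_def_of_ne_zero hc_ne, div_eq_mul_inv, ← ofReal_inv,
    log_mul_ofReal _ (inv_pos.2 hc) _ hw, Real.log_inv, ← ofReal_log hc.le, ← exp_sub]
  congr 1
  push_cast
  ring

/-- The part of `ζ̃_q(s, z)` that stays bounded as `s → 1`, stripped of the factor
`(1 - q)^s q^{z(s-1)}`: the series obtained by replacing `(1 - q^{n+z})^{-s}` by its deviation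
from `1`. -/
noncomputable def tzetaQRegularPart (q : ℝ) (s z : ℂ) : ℂ :=
  ∑' n : ℕ, ((q : ℂ) ^ (s - 1)) ^ n * ((1 - (q : ℂ) ^ ((n : ℂ) + z)) ^ (-s) - 1)

section QHurwitzZeta

variable {q : ℝ}

lemma cpow_div_qNum_cpow (hq0 : 0 < q) (hq1 : q < 1) (s z : ℂ) (n : ℕ) :
    (q : ℂ) ^ (((n : ℂ) + z) * (s - 1)) / qNum q ((n : ℂ) + z) ^ s =
      ((1 - q : ℝ) : ℂ) ^ s * (q : ℂ) ^ (z * (s - 1)) *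
        (((q : ℂ) ^ (s - 1)) ^ n * (1 - (q : ℂ) ^ ((n : ℂ) + z)) ^ (-s)) := by
  have hq_ne : (q : ℂ) ≠ 0 := ofReal_ne_zero.2 hq0.ne'
  have h_num : (q : ℂ) ^ (((n : ℂ) + z) * (s - 1)) =
      ((q : ℂ) ^ (s - 1)) ^ n * (q : ℂ) ^ (z * (s - 1)) := by
    rw [add_mul, cpow_add _ _ hq_ne, cpow_nat_mul]
  rw [h_num, qNum, ← ofReal_one, ← ofReal_sub, div_ofReal_cpow (sub_pos.2 hq1), cpow_neg,
    div_div_eq_mul_div]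
  ring

lemma tzetaQ_eq_mul_inv_add_regularPart (hq0 : 0 < q) (hq1 : q < 1) {s z : ℂ} (hs : 1 < s.re)
    (hz : 0 < z.re) :
    tzetaQ q s z = ((1 - q : ℝ) : ℂ) ^ s * (q : ℂ) ^ (z * (s - 1)) *
      ((1 - (q : ℂ) ^ (s - 1))⁻¹ + tzetaQRegularPart q s z) := by
  have hq_ne : (q : ℂ) ≠ 0 := ofReal_ne_zero.2 hq0.ne'
  have hq_norm : ‖(q : ℂ)‖ < 1 := by rwa [norm_real, Real.norm_of_nonneg hq0.le]
  have h_ratio : ‖(q : ℂ) ^ (s - 1)‖ < 1 := norm_ofReal_cpow_lt_one hq0 hq1 (by simpa using hs)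
  have h_regular : Summable fun n : ℕ =>
      ((q : ℂ) ^ (s - 1)) ^ n * ((1 - (q : ℂ) ^ ((n : ℂ) + z)) ^ (-s) - 1) :=
    summable_mul_one_sub_cpow_sub_one (-s) (summable_cpow_natCast_add hq_norm hq_ne z)
      (norm_ofReal_cpow_lt_one hq0 hq1 hz)
      (fun n => norm_cpow_natCast_add_le hq_norm.le hq_ne n z)
      (fun n => by rw [norm_pow]; exact pow_le_one₀ (norm_nonneg _) h_ratio.le)
  rw [tzetaQRegularPart, ← tsum_geometric_of_norm_lt_one h_ratio,
    ← (summable_geometric_of_norm_lt_one h_ratio).tsum_add h_regular, ← tsum_mul_left, tzetaQ]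
  refine tsum_congr fun n => ?_
  rw [cpow_div_qNum_cpow hq0 hq1]
  ring

lemma tendsto_tzetaQRegularPart (hq0 : 0 < q) (hq1 : q < 1) {z : ℂ} (hz : 0 < z.re) :
    Tendsto (fun s => tzetaQRegularPart q s z) (𝓝[{s : ℂ | 1 < s.re}] 1)
      (𝓝 (∑' n : ℕ, (q : ℂ) ^ ((n : ℂ) + z) / (1 - (q : ℂ) ^ ((n : ℂ) + z)))) := by
  have hq_ne : (q : ℂ) ≠ 0 := ofReal_ne_zero.2 hq0.ne'
  have hq_norm : ‖(q : ℂ)‖ < 1 := by rwa [norm_real, Real.norm_of_nonneg hq0.le]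
  have hx (n : ℕ) : ‖(q : ℂ) ^ ((n : ℂ) + z)‖ ≤ ‖(q : ℂ) ^ z‖ :=
    norm_cpow_natCast_add_le hq_norm.le hq_ne n z
  have hz_norm := norm_ofReal_cpow_lt_one hq0 hq1 hz
  have h_id : Tendsto (fun s : ℂ => s) (𝓝[{s : ℂ | 1 < s.re}] 1) (𝓝 1) := nhdsWithin_le_nhds
  have h_ratio : Tendsto (fun s : ℂ => (q : ℂ) ^ (s - 1)) (𝓝[{s : ℂ | 1 < s.re}] 1) (𝓝 1) := by
    simpa using (h_id.sub_const 1).const_cpow (Or.inl hq_ne)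
  have h_bound : ∀ᶠ s in 𝓝[{s : ℂ | 1 < s.re}] 1, ∀ n : ℕ, ‖((q : ℂ) ^ (s - 1)) ^ n‖ ≤ 1 := by
    filter_upwards [self_mem_nhdsWithin] with s hs n
    rw [norm_pow]
    exact pow_le_one₀ (norm_nonneg _)
      (norm_ofReal_cpow_lt_one hq0 hq1 (by simpa using hs)).le
  have h_tendsto := tendsto_tsum_mul_one_sub_cpow_sub_one
    (summable_cpow_natCast_add hq_norm hq_ne z) hz_norm hx h_id.neg
    (fun n => h_ratio.pow n) h_bound
  have h_term (n : ℕ) : (1 : ℂ) ^ n * ((1 - (q : ℂ) ^ ((n : ℂ) + z)) ^ (-1 : ℂ) - 1) =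
      (q : ℂ) ^ ((n : ℂ) + z) / (1 - (q : ℂ) ^ ((n : ℂ) + z)) := by
    rw [one_pow, one_mul, one_sub_cpow_neg_one_sub_one]
    exact fun h => by simpa [h] using (hx n).trans_lt hz_norm
  simpa only [h_term, tzetaQRegularPart] using h_tendsto

lemma gammaQz_eq_mul_add_tsum (hq0 : 0 < q) (hq1 : q < 1) {z : ℂ} (hz : 0 < z.re) :
    gammaQz q z = ((1 - q : ℝ) : ℂ) *
      (1 / 2 - (z + ((Real.log (1 - q) / Real.log q : ℝ) : ℂ)) +
        ∑' n : ℕ, (q : ℂ) ^ ((n : ℂ) + z) / (1 - (q : ℂ) ^ ((n : ℂ) + z))) := by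
  have hq_norm : ‖(q : ℂ)‖ < 1 := by rwa [norm_real, Real.norm_of_nonneg hq0.le]
  simp_rw [cpow_natCast_add (ofReal_ne_zero.2 hq0.ne')]
  rw [tsum_pow_mul_div_one_sub_pow_mul hq_norm (norm_ofReal_cpow_lt_one hq0 hq1 hz), mul_add,
    ← tsum_mul_left, gammaQz, add_comm]
  congr 1
  · ring
  · refine tsum_congr fun m => ?_
    rw [← Nat.cast_succ, cpow_nat_mul]
    push_cast
    rw [div_div_eq_mul_div, mul_comm, mul_div_assoc]

lemma one_sub_cpow_mul_cpow_eq_mul_exp (hq0 : 0 < q) (hq1 : q < 1) (s z : ℂ) :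
    ((1 - q : ℝ) : ℂ) ^ s * (q : ℂ) ^ (z * (s - 1)) = ((1 - q : ℝ) : ℂ) *
      exp ((z + ((Real.log (1 - q) / Real.log q : ℝ) : ℂ)) * ((s - 1) * (Real.log q : ℝ))) := by
  have hq_ne : (q : ℂ) ≠ 0 := ofReal_ne_zero.2 hq0.ne'
  have h_ne : ((1 - q : ℝ) : ℂ) ≠ 0 := ofReal_ne_zero.2 (sub_pos.2 hq1).ne'
  have h_log : ((Real.log q : ℝ) : ℂ) ≠ 0 := ofReal_ne_zero.2 (Real.log_neg hq0 hq1).ne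
  have h_split : ((1 - q : ℝ) : ℂ) ^ s =
      ((1 - q : ℝ) : ℂ) * ((1 - q : ℝ) : ℂ) ^ (s - 1) := by
    rw [cpow_sub _ _ h_ne, cpow_one, mul_div_cancel₀ _ h_ne]
  rw [h_split, mul_assoc, cpow_def_of_ne_zero h_ne, cpow_def_of_ne_zero hq_ne, ← exp_add,
    ← ofReal_log hq0.le, ← ofReal_log (sub_pos.2 hq1).le]
  congr 2
  push_cast
  field_simp
  ring

end QHurwitzZeta

/-- For `0 < q < 1` and `Re z > 0`: as `s → 1` within the half-plane `Re s > 1`,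
`ζ̃_q(s,z) − (q−1)/((s−1) log q)` tends to `γ_q(z)`. -/
theorem tendsto_tzetaQ_sub_pole (q : ℝ) (hq0 : 0 < q) (hq1 : q < 1) (z : ℂ)
    (hz : 0 < z.re) :
    Filter.Tendsto
      (fun s : ℂ => tzetaQ q s z - ((q : ℂ) - 1) / ((s - 1) * ((Real.log q : ℝ) : ℂ)))
      (nhdsWithin 1 {s : ℂ | 1 < s.re}) (nhds (gammaQz q z)) := by
  have hq_ne : (q : ℂ) ≠ 0 := ofReal_ne_zero.2 hq0.ne'
  have h_log : ((Real.log q : ℝ) : ℂ) ≠ 0 := ofReal_ne_zero.2 (Real.log_neg hq0 hq1).ne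
  set a : ℂ := z + ((Real.log (1 - q) / Real.log q : ℝ) : ℂ) with ha
  have hu : Tendsto _ (𝓝[{s : ℂ | 1 < s.re}] 1) _ := tendsto_sub_mul_nhdsNE (by simp) h_log
  have h_pole := (tendsto_exp_mul_div_one_sub_exp_add_inv a).comp hu
  have h_factor : Tendsto (fun u : ℂ => exp (a * u)) (𝓝[≠] 0) (𝓝 1) := by
    have h : Continuous fun u : ℂ => exp (a * u) := by fun_prop
    simpa using (h.tendsto 0).mono_left nhdsWithin_le_nhds
  have h_regular := (h_factor.comp hu).mul (tendsto_tzetaQRegularPart hq0 hq1 hz)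
  rw [one_mul] at h_regular
  rw [gammaQz_eq_mul_add_tsum hq0 hq1 hz]
  refine ((h_pole.add h_regular).const_mul ((1 - q : ℝ) : ℂ)).congr' ?_
  filter_upwards [self_mem_nhdsWithin] with s hs
  rw [tzetaQ_eq_mul_inv_add_regularPart hq0 hq1 hs hz, one_sub_cpow_mul_cpow_eq_mul_exp hq0 hq1,
    ← ha, cpow_def_of_ne_zero hq_ne (s - 1), ← ofReal_log hq0.le, mul_comm _ (s - 1)]
  simp only [Function.comp_apply]
  push_cast
  ring
end

section
/- Define γ_q := ∑_{n=1}^{∞} q^n/[n]_q + (1−q)·(−1/2 − log(1−q)/log q) for real q with 0 < q < 1. Then lim_{q → 1⁻} γ_q = γ, the Euler–Mascheroni constant, the limit being taken over real q increasing to 1. -/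
/-- `γ_q = ∑_{n=1}^∞ q^n/[n]_q + (1−q)(−1/2 − log(1−q)/log q)` for real `0 < q < 1`,
where `[n]_q = (1−q^n)/(1−q)`. -/
noncomputable def gammaQ (q : ℝ) : ℝ :=
  (∑' n : ℕ, q ^ ((n : ℕ) + 1) / ((1 - q ^ ((n : ℕ) + 1)) / (1 - q)))
    + (1 - q) * (-(1 / 2) - Real.log (1 - q) / Real.log q)

/-!
Let `c = (1 - q) / (-log q)`, the logarithmic mean of `q` and `1`. Since `[n]_q → 1 / (1 - q)`, the
series of the `log [n + 2]_q - log [n + 1]_q` telescopes to `-log (1 - q)`, so the correction term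
of `γ_q` can be spread over the sum:
`γ_q = ∑ n, (q ^ (n + 1) / [n + 1]_q - c * (log [n + 2]_q - log [n + 1]_q)) - (1 - q) / 2`.
As `q → 1`, also `c → 1`, and the `n`-th term tends to `1 / (n + 1) - (log (n + 2) - log (n + 1))`;
these limits sum to `γ`. Limit and sum may be exchanged by dominated convergence: from `q ≤ c ≤ 1`
and `(y - x) / y ≤ log y - log x ≤ (y - x) / x`, the `n`-th term lies between `0` and
`q ^ (n + 1) / ([n + 1]_q * [n + 2]_q)`, which is at most `1 / (n + 1) ^ 2` because
`[n + 1]_q ≥ (n + 1) * q ^ (n / 2)` by AM-GM.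
-/

open Filter Finset Topology

section Telescoping

theorem hasSum_sub_of_monotone {a : ℕ → ℝ} {l : ℝ} (ha : Monotone a)
    (hl : Tendsto a atTop (𝓝 l)) : HasSum (fun n ↦ a (n + 1) - a n) (l - a 0) := by
  rw [hasSum_iff_tendsto_nat_of_nonneg fun n ↦ sub_nonneg.2 (ha n.le_succ)]
  simpa only [sum_range_sub] using hl.sub_const (a 0)

theorem eulerMascheroniSeq_succ_sub (n : ℕ) :
    Real.eulerMascheroniSeq (n + 1) - Real.eulerMascheroniSeq n =
      1 / (n + 1) - (Real.log (n + 2) - Real.log (n + 1)) := by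
  have h : (n : ℝ) + 1 + 1 = n + 2 := by ring
  simp only [Real.eulerMascheroniSeq, harmonic_succ]
  push_cast
  rw [h]
  ring

theorem hasSum_one_div_sub_log_sub_log :
    HasSum (fun n : ℕ ↦ 1 / ((n : ℝ) + 1) - (Real.log (n + 2) - Real.log (n + 1)))
      Real.eulerMascheroniConstant := by
  simpa only [eulerMascheroniSeq_succ_sub, Real.eulerMascheroniSeq_zero, sub_zero] using
    hasSum_sub_of_monotone Real.strictMono_eulerMascheroniSeq.monotone
      Real.tendsto_eulerMascheroniSeq

end Telescoping

section LogMean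

variable {x y : ℝ}

theorem log_sub_log_le_sub_div_left (hx : 0 < x) (hy : 0 < y) :
    Real.log y - Real.log x ≤ (y - x) / x := by
  rw [← Real.log_div hy.ne' hx.ne', sub_div, div_self hx.ne']
  exact Real.log_le_sub_one_of_pos (div_pos hy hx)

theorem sub_div_right_le_log_sub_log (hx : 0 < x) (hy : 0 < y) :
    (y - x) / y ≤ Real.log y - Real.log x := by
  rw [← neg_sub x y, neg_div]
  linarith [log_sub_log_le_sub_div_left hy hx]

/-- The logarithmic mean of two positive reals. On the diagonal its value is the junk value `0`
instead of the continuous extension `x`. -/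
noncomputable def logMean (x y : ℝ) : ℝ := (y - x) / (Real.log y - Real.log x)

theorem le_logMean (hx : 0 < x) (hxy : x < y) : x ≤ logMean x y := by
  rw [logMean, le_div_iff₀ (sub_pos.2 (Real.log_lt_log hx hxy)), mul_comm, ← le_div_iff₀ hx]
  exact log_sub_log_le_sub_div_left hx (hx.trans hxy)

theorem logMean_le (hx : 0 < x) (hxy : x < y) : logMean x y ≤ y := by
  have hy : 0 < y := hx.trans hxy
  rw [logMean, div_le_iff₀ (sub_pos.2 (Real.log_lt_log hx hxy)), mul_comm, ← div_le_iff₀ hy]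
  exact sub_div_right_le_log_sub_log hx hy

theorem tendsto_logMean_left (hy : y ≠ 0) :
    Tendsto (fun x ↦ logMean x y) (𝓝[≠] y) (𝓝 y) := by
  have h := (Real.hasDerivAt_log hy).tendsto_slope.inv₀ (inv_ne_zero hy)
  rw [inv_inv] at h
  refine h.congr fun x ↦ ?_
  rw [slope_def_field, inv_div, logMean, ← neg_sub y x, ← neg_sub (Real.log y), neg_div_neg_eq]

end LogMean

section QNumber

/-- The `q`-analogue `[n]_q` of the natural number `n`, as a polynomial in `q`, so that
`[n]_1 = n`. -/
def qNumber {R : Type*} [Semiring R] (q : R) (n : ℕ) : R := ∑ i ∈ range n, q ^ i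

section Semiring

variable {R : Type*} [Semiring R]

theorem qNumber_one_right (q : R) : qNumber q 1 = 1 := by simp [qNumber]

theorem qNumber_one_left (n : ℕ) : qNumber (1 : R) n = n := one_geom_sum n

theorem qNumber_succ (q : R) (n : ℕ) : qNumber q (n + 1) = qNumber q n + q ^ n :=
  sum_range_succ _ n

theorem qNumber_succ' (q : R) (n : ℕ) : qNumber q (n + 1) = q * qNumber q n + 1 :=
  geom_sum_succ

theorem continuous_qNumber [TopologicalSpace R] [IsTopologicalSemiring R] (n : ℕ) :
    Continuous fun q : R ↦ qNumber q n := by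
  unfold qNumber
  fun_prop

end Semiring

theorem qNumber_eq_div {K : Type*} [DivisionRing K] {q : K} (hq : q ≠ 1) (n : ℕ) :
    qNumber q n = (1 - q ^ n) / (1 - q) :=
  eq_div_of_mul_eq (sub_ne_zero.2 hq.symm) (geom_sum_mul_neg q n)

theorem tendsto_qNumber_atTop {K : Type*} [NormedDivisionRing K] {q : K} (hq : ‖q‖ < 1) :
    Tendsto (qNumber q) atTop (𝓝 (1 - q)⁻¹) :=
  (hasSum_geometric_of_norm_lt_one hq).tendsto_sum_nat

section Ordered

variable {R : Type*}

theorem monotone_qNumber [Semiring R] [PartialOrder R] [IsOrderedRing R] {q : R} (hq : 0 ≤ q) :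
    Monotone (qNumber q) :=
  monotone_nat_of_le_succ fun n ↦ by
    rw [qNumber_succ]
    exact le_add_of_nonneg_right (pow_nonneg hq n)

theorem one_le_qNumber_succ [Semiring R] [PartialOrder R] [IsOrderedRing R] {q : R}
    (hq : 0 ≤ q) (n : ℕ) : 1 ≤ qNumber q (n + 1) :=
  (qNumber_one_right q).ge.trans (monotone_qNumber hq n.succ_pos)

theorem qNumber_succ_pos [Semiring R] [PartialOrder R] [IsStrictOrderedRing R] {q : R}
    (hq : 0 ≤ q) (n : ℕ) : 0 < qNumber q (n + 1) :=
  geom_sum_pos hq n.succ_ne_zero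

theorem succ_mul_pow_le_qNumber_sq [CommRing R] [LinearOrder R] [IsStrictOrderedRing R]
    (s : R) (n : ℕ) : (n + 1) * s ^ n ≤ qNumber (s ^ 2) (n + 1) := by
  -- Pair the summand `s ^ (2 * i)` with its mirror image `s ^ (2 * (n - i))`.
  have hreflect : ∑ i ∈ range (n + 1), (s ^ 2) ^ (n - i) = qNumber (s ^ 2) (n + 1) :=
    sum_range_reflect (fun i ↦ (s ^ 2) ^ i) (n + 1)
  have hpair : ∀ i ∈ range (n + 1), 2 * s ^ n ≤ (s ^ 2) ^ i + (s ^ 2) ^ (n - i) := by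
    intro i hi
    have hin : i + (n - i) = n := Nat.add_sub_of_le (Nat.lt_succ_iff.1 (mem_range.1 hi))
    calc 2 * s ^ n = 2 * s ^ i * s ^ (n - i) := by rw [mul_assoc, ← pow_add, hin]
      _ ≤ (s ^ i) ^ 2 + (s ^ (n - i)) ^ 2 := two_mul_le_add_sq _ _
      _ = (s ^ 2) ^ i + (s ^ 2) ^ (n - i) := by simp only [pow_right_comm]
  have htwice : 2 * ((n + 1) * s ^ n) ≤ 2 * qNumber (s ^ 2) (n + 1) := by
    calc 2 * ((n + 1) * s ^ n) = ∑ i ∈ range (n + 1), 2 * s ^ n := by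
          rw [sum_const, card_range, nsmul_eq_mul]
          push_cast
          ring
      _ ≤ ∑ i ∈ range (n + 1), ((s ^ 2) ^ i + (s ^ 2) ^ (n - i)) := sum_le_sum hpair
      _ = 2 * qNumber (s ^ 2) (n + 1) := by rw [sum_add_distrib, hreflect, two_mul, qNumber]
  exact le_of_mul_le_mul_left htwice two_pos

end Ordered

theorem succ_sq_mul_pow_le_sq_qNumber {q : ℝ} (hq : 0 ≤ q) (n : ℕ) :
    ((n : ℝ) + 1) ^ 2 * q ^ n ≤ qNumber q (n + 1) ^ 2 := by
  obtain ⟨s, hs, rfl⟩ : ∃ s : ℝ, 0 ≤ s ∧ s ^ 2 = q := ⟨√q, q.sqrt_nonneg, Real.sq_sqrt hq⟩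
  rw [← pow_right_comm, ← mul_pow]
  exact pow_le_pow_left₀ (by positivity) (succ_mul_pow_le_qNumber_sq s n) 2

theorem log_qNumber_succ_sub_le {q : ℝ} (hq : 0 ≤ q) (n : ℕ) :
    Real.log (qNumber q (n + 2)) - Real.log (qNumber q (n + 1)) ≤
      q ^ (n + 1) / qNumber q (n + 1) := by
  have h := log_sub_log_le_sub_div_left (qNumber_succ_pos hq n) (qNumber_succ_pos hq (n + 1))
  rwa [← sub_eq_of_eq_add' (qNumber_succ q (n + 1))]

theorem le_log_qNumber_succ_sub {q : ℝ} (hq : 0 ≤ q) (n : ℕ) :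
    q ^ (n + 1) / qNumber q (n + 2) ≤
      Real.log (qNumber q (n + 2)) - Real.log (qNumber q (n + 1)) := by
  have h := sub_div_right_le_log_sub_log (qNumber_succ_pos hq n) (qNumber_succ_pos hq (n + 1))
  rwa [← sub_eq_of_eq_add' (qNumber_succ q (n + 1))]

theorem pow_div_qNumber_mul_qNumber_le {q : ℝ} (h0 : 0 ≤ q) (h1 : q ≤ 1) (n : ℕ) :
    q ^ (n + 1) / (qNumber q (n + 1) * qNumber q (n + 2)) ≤ 1 / ((n : ℝ) + 1) ^ 2 := by
  have hx : 0 < qNumber q (n + 1) := qNumber_succ_pos h0 n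
  have hxy : qNumber q (n + 1) ≤ qNumber q (n + 2) := monotone_qNumber h0 (n + 1).le_succ
  rw [div_le_div_iff₀ (mul_pos hx (hx.trans_le hxy)) (by positivity), one_mul]
  calc q ^ (n + 1) * ((n : ℝ) + 1) ^ 2
      ≤ q ^ n * ((n : ℝ) + 1) ^ 2 := by
        gcongr ?_ * _
        exact pow_le_pow_of_le_one h0 h1 n.le_succ
    _ = ((n : ℝ) + 1) ^ 2 * q ^ n := mul_comm _ _
    _ ≤ qNumber q (n + 1) ^ 2 := succ_sq_mul_pow_le_sq_qNumber h0 n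
    _ = qNumber q (n + 1) * qNumber q (n + 1) := sq _
    _ ≤ qNumber q (n + 1) * qNumber q (n + 2) := by gcongr

theorem hasSum_log_qNumber_sub {q : ℝ} (h0 : 0 ≤ q) (h1 : q < 1) :
    HasSum (fun n ↦ Real.log (qNumber q (n + 2)) - Real.log (qNumber q (n + 1)))
      (-Real.log (1 - q)) := by
  have hmono : Monotone fun n ↦ Real.log (qNumber q (n + 1)) := fun m n hmn ↦
    Real.log_le_log (qNumber_succ_pos h0 m)
      (monotone_qNumber h0 (Nat.succ_le_succ hmn))
  have hlim : Tendsto (fun n ↦ Real.log (qNumber q (n + 1))) atTop (𝓝 (-Real.log (1 - q))) := by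
    rw [← Real.log_inv]
    have hnorm : ‖q‖ < 1 := by rwa [Real.norm_of_nonneg h0]
    exact ((tendsto_qNumber_atTop hnorm).comp (tendsto_add_atTop_nat 1)).log
      (inv_ne_zero (sub_pos.2 h1).ne')
  simpa only [zero_add, qNumber_one_right, Real.log_one, sub_zero] using
    hasSum_sub_of_monotone hmono hlim

theorem summable_pow_div_qNumber {q : ℝ} (h0 : 0 ≤ q) (h1 : q < 1) :
    Summable fun n : ℕ ↦ q ^ (n + 1) / qNumber q (n + 1) := by
  refine .of_nonneg_of_le (fun n ↦ ?_) (fun n ↦ ?_)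
    ((summable_nat_add_iff 1).2 (summable_geometric_of_lt_one h0 h1))
  · exact div_nonneg (pow_nonneg h0 _) (qNumber_succ_pos h0 n).le
  · exact div_le_self (pow_nonneg h0 _) (one_le_qNumber_succ h0 n)

end QNumber

section GammaQ

/-- The `n`-th term, counted from `0`, of the series for `γ_q + (1 - q) / 2` obtained by spreading
the logarithmic correction term of `γ_q` over the sum. -/
noncomputable def gammaQTerm (q : ℝ) (n : ℕ) : ℝ :=
  q ^ (n + 1) / qNumber q (n + 1) -
    logMean q 1 * (Real.log (qNumber q (n + 2)) - Real.log (qNumber q (n + 1)))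

variable {q : ℝ}

theorem gammaQ_eq_tsum_gammaQTerm_sub (h0 : 0 < q) (h1 : q < 1) :
    gammaQ q = ∑' n, gammaQTerm q n - (1 - q) / 2 := by
  have htsum : ∑' n, gammaQTerm q n =
      ∑' n : ℕ, q ^ (n + 1) / qNumber q (n + 1) - logMean q 1 * -Real.log (1 - q) :=
    ((summable_pow_div_qNumber h0.le h1).hasSum.sub
      ((hasSum_log_qNumber_sub h0.le h1).mul_left _)).tsum_eq
  rw [htsum, gammaQ, logMean, Real.log_one]
  simp only [qNumber_eq_div h1.ne]
  ring

theorem gammaQTerm_nonneg (h0 : 0 < q) (h1 : q < 1) (n : ℕ) : 0 ≤ gammaQTerm q n := by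
  refine sub_nonneg.2 (le_trans ?_ (log_qNumber_succ_sub_le h0.le n))
  refine mul_le_of_le_one_left (sub_nonneg.2 ?_) (logMean_le h0 h1)
  exact Real.log_le_log (qNumber_succ_pos h0.le n)
    (monotone_qNumber h0.le (n + 1).le_succ)

theorem gammaQTerm_le_pow_div (h0 : 0 < q) (h1 : q < 1) (n : ℕ) :
    gammaQTerm q n ≤ q ^ (n + 1) / (qNumber q (n + 1) * qNumber q (n + 2)) := by
  have hx : 0 < qNumber q (n + 1) := qNumber_succ_pos h0.le n
  have hy : 0 < qNumber q (n + 2) := qNumber_succ_pos h0.le (n + 1)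
  have hlog : q * (q ^ (n + 1) / qNumber q (n + 2)) ≤
      logMean q 1 * (Real.log (qNumber q (n + 2)) - Real.log (qNumber q (n + 1))) :=
    mul_le_mul (le_logMean h0 h1) (le_log_qNumber_succ_sub h0.le n) (by positivity)
      (h0.le.trans (le_logMean h0 h1))
  calc gammaQTerm q n
      ≤ q ^ (n + 1) / qNumber q (n + 1) - q * (q ^ (n + 1) / qNumber q (n + 2)) :=
        sub_le_sub_left hlog _
    _ = q ^ (n + 1) * (qNumber q (n + 2) - q * qNumber q (n + 1)) /
          (qNumber q (n + 1) * qNumber q (n + 2)) := by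
        field_simp
    _ = q ^ (n + 1) / (qNumber q (n + 1) * qNumber q (n + 2)) := by
        rw [qNumber_succ' q (n + 1), add_sub_cancel_left, mul_one]

theorem norm_gammaQTerm_le (h0 : 0 < q) (h1 : q < 1) (n : ℕ) :
    ‖gammaQTerm q n‖ ≤ 1 / ((n : ℝ) + 1) ^ 2 := by
  rw [Real.norm_of_nonneg (gammaQTerm_nonneg h0 h1 n)]
  exact (gammaQTerm_le_pow_div h0 h1 n).trans (pow_div_qNumber_mul_qNumber_le h0.le h1.le n)

theorem tendsto_gammaQTerm (n : ℕ) :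
    Tendsto (fun q ↦ gammaQTerm q n) (𝓝[≠] 1)
      (𝓝 (1 / ((n : ℝ) + 1) - (Real.log (n + 2) - Real.log (n + 1)))) := by
  have hpow : Tendsto (fun q : ℝ ↦ q ^ (n + 1)) (𝓝[≠] 1) (𝓝 1) := by
    simpa only [one_pow] using tendsto_nhdsWithin_of_tendsto_nhds
      ((continuous_pow (M := ℝ) (n + 1)).tendsto 1)
  have hqNumber (m : ℕ) : Tendsto (fun q : ℝ ↦ qNumber q m) (𝓝[≠] 1) (𝓝 m) := by
    simpa only [qNumber_one_left] using tendsto_nhdsWithin_of_tendsto_nhds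
      ((continuous_qNumber (R := ℝ) m).tendsto 1)
  have hne (m : ℕ) : ((m + 1 : ℕ) : ℝ) ≠ 0 := Nat.cast_ne_zero.2 m.succ_ne_zero
  have hlog (m : ℕ) := (hqNumber (m + 1)).log (hne m)
  have h := (hpow.div (hqNumber (n + 1)) (hne n)).sub
    ((tendsto_logMean_left one_ne_zero).mul ((hlog (n + 1)).sub (hlog n)))
  rw [one_mul] at h
  exact_mod_cast h

theorem tendsto_tsum_gammaQTerm :
    Tendsto (fun q ↦ ∑' n, gammaQTerm q n) (𝓝[Set.Ioo 0 1] 1)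
      (𝓝 Real.eulerMascheroniConstant) := by
  have hsummable : Summable fun n : ℕ ↦ 1 / ((n : ℝ) + 1) ^ 2 := by
    exact_mod_cast (summable_nat_add_iff 1).2 (Real.summable_one_div_nat_pow.2 one_lt_two)
  have hle : 𝓝[Set.Ioo 0 1] (1 : ℝ) ≤ 𝓝[≠] 1 := nhdsWithin_mono 1 fun q hq ↦ hq.2.ne
  rw [← hasSum_one_div_sub_log_sub_log.tsum_eq]
  refine tendsto_tsum_of_dominated_convergence hsummable
    (fun n ↦ (tendsto_gammaQTerm n).mono_left hle) ?_
  filter_upwards [self_mem_nhdsWithin] with q hq n using norm_gammaQTerm_le hq.1 hq.2 n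

end GammaQ

/-- `lim_{q↑1} γ_q = γ`, the Euler–Mascheroni constant, the limit being over real `q`
increasing to `1` (within `(0,1)`). -/
theorem tendsto_gammaQ_eulerMascheroni :
    Filter.Tendsto gammaQ (nhdsWithin 1 (Set.Ioo 0 1))
      (nhds Real.eulerMascheroniConstant) := by
  have hcorrection : Tendsto (fun q : ℝ ↦ (1 - q) / 2) (𝓝[Set.Ioo 0 1] 1) (𝓝 0) :=
    tendsto_nhdsWithin_of_tendsto_nhds (Continuous.tendsto' (by fun_prop) 1 0 (by norm_num))
  have hlim := tendsto_tsum_gammaQTerm.sub hcorrection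
  rw [sub_zero] at hlim
  refine hlim.congr' ?_
  filter_upwards [self_mem_nhdsWithin] with q hq
  exact (gammaQ_eq_tsum_gammaQTerm_sub hq.1 hq.2).symm
end

section
/- Let z > 0 be real. Then lim_{q → 1⁻} Γ̃_q(z) = Γ(z), where Γ is the Euler gamma function and the limit is taken over real q increasing to 1. -/
/-!
The proof is a Bohr–Mollerup argument carried out uniformly in `q`. For a convex function `f` on
`(0, ∞)` and every `n`, finitely many values of the unit difference `D y = f (y + 1) - f y`
determine `f x - f 1` up to an error of at most `x (D (n + 1 + x) - D n)`. If the unit differences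
of a family of convex functions converge pointwise to `log`, these bounds converge to Euler's
approximants of `log Γ x`, so the family, once normalised at `1`, converges to `log Γ`.

The function `F_q` vanishes at `1`, and its unit difference `q^{-z} (log [z]_q - z log q)` tends to
`log z` as `q → 1`. It is convex for `q ∈ [1/2, 1)`: the series is a positive combination of
exponentials in `z`, and so is `q^{1-z}`, while `q^{-z} ((1 - q) z - 1)` has nonnegative second
derivative as soon as `-log q ≤ 2 (1 - q)`.
-/

/-- The logarithm `F_q(z) = log Γ̃_q(z)` of the `q`-gamma function associated with the
`q`-Hurwitz zeta function, given by its explicit closed form: for real `z > 0`,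
`F_q(z) = ∑_{n=2}^∞ (1/n)(q^{z(n−1)} − q^{n−1})/(1 − q^{n−1}) − z + 1
  + ((q^{−z}(1 − (1−q)z) − 1)/(1−q)²) q log q + ((1 − q^{1−z})/(1−q)) log(1−q)`
(real powers of `q` via `rpow`). -/
noncomputable def Fq (q z : ℝ) : ℝ :=
  (∑' n : ℕ, (1 / ((n : ℝ) + 2)) *
      (q ^ (z * ((n : ℝ) + 1)) - q ^ ((n : ℝ) + 1)) / (1 - q ^ ((n : ℝ) + 1)))
    - z + 1
    + ((q ^ (-z) * (1 - (1 - q) * z) - 1) / (1 - q) ^ 2) * q * Real.log q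
    + ((1 - q ^ (1 - z)) / (1 - q)) * Real.log (1 - q)

/-- The `q`-gamma function `Γ̃_q(z) = exp F_q(z)` associated with the `q`-Hurwitz zeta
function. -/
noncomputable def GammaQ (q z : ℝ) : ℝ := Real.exp (Fq q z)

open Filter Set Topology
open scoped fwdDiff

section Squeeze

variable {α ι κ : Type*} [TopologicalSpace α] [Preorder α] [OrderTopology α]
  {l : Filter ι} {k : Filter κ} {f : ι → α} {a b : κ → ι → α} {A B : κ → α} {c : α}

theorem tendsto_of_eventually_tendsto_squeeze [k.NeBot]
    (haA : ∀ᶠ n in k, Tendsto (a n) l (𝓝 (A n))) (hA : Tendsto A k (𝓝 c))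
    (hbB : ∀ᶠ n in k, Tendsto (b n) l (𝓝 (B n))) (hB : Tendsto B k (𝓝 c))
    (haf : ∀ᶠ n in k, ∀ᶠ i in l, a n i ≤ f i) (hfb : ∀ᶠ n in k, ∀ᶠ i in l, f i ≤ b n i) :
    Tendsto f l (𝓝 c) := by
  refine tendsto_order.2 ⟨fun u hu => ?_, fun u hu => ?_⟩
  · obtain ⟨n, hn, hun, hle⟩ := (haA.and (((tendsto_order.1 hA).1 u hu).and haf)).exists
    filter_upwards [(tendsto_order.1 hn).1 u hun, hle] with i hui hi using hui.trans_le hi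
  · obtain ⟨n, hn, hun, hle⟩ := (hbB.and (((tendsto_order.1 hB).2 u hu).and hfb)).exists
    filter_upwards [(tendsto_order.1 hn).2 u hun, hle] with i hui hi using hi.trans_lt hui

end Squeeze

section Convexity

theorem convexOn_tsum {𝕜 E β ι : Type*} [Semiring 𝕜] [PartialOrder 𝕜] [AddCommMonoid E] [SMul 𝕜 E]
    [AddCommMonoid β] [PartialOrder β] [IsOrderedAddMonoid β] [Module 𝕜 β] [TopologicalSpace β]
    [OrderClosedTopology β] [ContinuousAdd β] [ContinuousConstSMul 𝕜 β]
    {s : Set E} {f : ι → E → β} (hs : Convex 𝕜 s) (hf : ∀ i, ConvexOn 𝕜 s (f i))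
    (hsum : ∀ x ∈ s, Summable fun i => f i x) : ConvexOn 𝕜 s fun x => ∑' i, f i x := by
  refine ⟨hs, fun x hx y hy a b ha hb hab => ?_⟩
  have hax := (hsum x hx).const_smul a
  have hby := (hsum y hy).const_smul b
  calc ∑' i, f i (a • x + b • y)
      ≤ ∑' i, (a • f i x + b • f i y) :=
        (hsum _ (hs hx hy ha hb hab)).tsum_le_tsum (fun i => (hf i).2 hx hy ha hb hab) (hax.add hby)
    _ = a • ∑' i, f i x + b • ∑' i, f i y := by
        rw [hax.tsum_add hby, (hsum x hx).tsum_const_smul, (hsum y hy).tsum_const_smul]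

theorem hasDerivAt_const_rpow_mul_affine {b : ℝ} (hb : 0 < b) (c d z : ℝ) :
    HasDerivAt (fun z : ℝ => b ^ z * (c * z + d))
      (b ^ z * (Real.log b * c * z + (Real.log b * d + c))) z := by
  have haffine : HasDerivAt (fun z : ℝ => c * z + d) c z := by
    simpa using ((hasDerivAt_id z).const_mul c).add_const d
  exact ((Real.hasStrictDerivAt_const_rpow hb z).hasDerivAt.mul haffine).congr_deriv (by ring)

theorem convexOn_const_rpow_mul_affine {b c d : ℝ} (hb : 1 ≤ b) (hc : 0 ≤ c)
    (hcd : 0 ≤ 2 * c + Real.log b * d) :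
    ConvexOn ℝ (Ici 0) fun z : ℝ => b ^ z * (c * z + d) := by
  have hb₀ : 0 < b := one_pos.trans_le hb
  have hderiv := hasDerivAt_const_rpow_mul_affine hb₀
  refine convexOn_of_hasDerivWithinAt2_nonneg (convex_Ici 0)
    (fun z _ => (hderiv _ _ z).continuousAt.continuousWithinAt)
    (fun z _ => (hderiv _ _ z).hasDerivWithinAt) (fun z _ => (hderiv _ _ z).hasDerivWithinAt) ?_
  intro z hz
  have hz₀ : 0 ≤ z := interior_subset hz
  have hlog : 0 ≤ Real.log b := Real.log_nonneg hb
  calc (0 : ℝ) ≤ b ^ z * (Real.log b * (Real.log b * c * z + (2 * c + Real.log b * d))) := by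
        positivity
    _ = _ := by ring

variable {𝕜 : Type*} [Field 𝕜] [LinearOrder 𝕜] [IsStrictOrderedRing 𝕜] {s : Set 𝕜} {f : 𝕜 → 𝕜}
  {a x : 𝕜}

theorem mul_fwdDiff_le_sub_of_convexOn (hf : ConvexOn 𝕜 s f) (hx : 0 < x) (ha : a ∈ s)
    (hax : a + 1 + x ∈ s) : x * Δ_[1] f a ≤ f (a + 1 + x) - f (a + 1) := by
  have hslope := hf.slope_mono_adjacent ha hax (lt_add_one a) (lt_add_of_pos_right _ hx)
  rw [add_sub_cancel_left, add_sub_cancel_left, div_one, le_div_iff₀ hx] at hslope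
  rwa [mul_comm]

theorem sub_le_mul_fwdDiff_of_convexOn (hf : ConvexOn 𝕜 s f) (hx : 0 < x) (ha : a ∈ s)
    (hax : a + x + 1 ∈ s) : f (a + x) - f a ≤ x * Δ_[1] f (a + x) := by
  have hslope := hf.slope_mono_adjacent ha hax (lt_add_of_pos_right _ hx) (lt_add_one _)
  rw [add_sub_cancel_left, add_sub_cancel_left, div_one, div_le_iff₀ hx] at hslope
  rwa [mul_comm]

end Convexity

section BohrMollerup

/-- Euler's approximant `x D(n) + ∑_{m=1}^{n} D(m) - ∑_{m=0}^{n} D(x + m)` to the value at `x` of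
the function with unit difference `D` that vanishes at `1`. For `D = log` it is
`Real.BohrMollerup.logGammaSeq`. -/
noncomputable def eulerSeq (D : ℝ → ℝ) (x : ℝ) (n : ℕ) : ℝ :=
  x * D n + ∑ m ∈ Finset.range n, D (1 + m) - ∑ m ∈ Finset.range (n + 1), D (x + m)

theorem eulerSeq_log (x : ℝ) (n : ℕ) :
    eulerSeq Real.log x n = Real.BohrMollerup.logGammaSeq x n := by
  have hfactorial : ∑ m ∈ Finset.range n, Real.log (1 + m) = Real.log n.factorial := by
    rw [← Real.log_prod fun m _ => by positivity, ← Finset.prod_range_add_one_eq_factorial]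
    push_cast
    simp only [add_comm]
  rw [eulerSeq, hfactorial, Real.BohrMollerup.logGammaSeq]

theorem tendsto_eulerSeq {ι : Type*} {l : Filter ι} {D : ι → ℝ → ℝ} {D₀ : ℝ → ℝ}
    (hD : ∀ y, 0 < y → Tendsto (fun i => D i y) l (𝓝 (D₀ y))) {x : ℝ} (hx : 0 < x) {n : ℕ}
    (hn : 0 < n) : Tendsto (fun i => eulerSeq (D i) x n) l (𝓝 (eulerSeq D₀ x n)) := by
  have hsum (y : ℝ) (hy : 0 < y) (k : ℕ) :
      Tendsto (fun i => ∑ m ∈ Finset.range k, D i (y + m)) l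
        (𝓝 (∑ m ∈ Finset.range k, D₀ (y + m))) :=
    tendsto_finsetSum _ fun m _ => hD (y + m) (by positivity)
  exact (((hD n (by positivity)).const_mul x).add (hsum 1 one_pos n)).sub (hsum x hx (n + 1))

theorem sum_range_fwdDiff_one {R G : Type*} [AddCommMonoidWithOne R] [AddCommGroup G]
    (f : R → G) (x : R) (n : ℕ) :
    ∑ m ∈ Finset.range n, Δ_[1] f (x + m) = f (x + n) - f x := by
  simpa [fwdDiff, add_assoc] using Finset.sum_range_sub (fun m : ℕ => f (x + m)) n

theorem eulerSeq_fwdDiff (f : ℝ → ℝ) (x : ℝ) (n : ℕ) :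
    eulerSeq (Δ_[1] f) x n =
      f x - f 1 - (f (n + 1 + x) - f (n + 1) - x * Δ_[1] f n) := by
  rw [eulerSeq, sum_range_fwdDiff_one, sum_range_fwdDiff_one, Nat.cast_succ, add_comm x,
    add_comm 1 (n : ℝ)]
  ring

variable {f : ℝ → ℝ} {x : ℝ} {n : ℕ}

theorem eulerSeq_fwdDiff_le (hf : ConvexOn ℝ (Ioi 0) f) (hx : 0 < x) (hn : 0 < n) :
    eulerSeq (Δ_[1] f) x n ≤ f x - f 1 := by
  have hstep := mul_fwdDiff_le_sub_of_convexOn hf hx (a := (n : ℝ))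
    (mem_Ioi.2 (Nat.cast_pos.2 hn)) (mem_Ioi.2 (by positivity))
  rw [eulerSeq_fwdDiff]
  linarith

theorem le_eulerSeq_fwdDiff_add (hf : ConvexOn ℝ (Ioi 0) f) (hx : 0 < x) :
    f x - f 1 ≤ eulerSeq (Δ_[1] f) x n + x * (Δ_[1] f (n + 1 + x) - Δ_[1] f n) := by
  have hstep := sub_le_mul_fwdDiff_of_convexOn hf hx (a := (n : ℝ) + 1) (mem_Ioi.2 (by positivity))
    (mem_Ioi.2 (by positivity))
  rw [eulerSeq_fwdDiff]
  linarith

theorem tendsto_sub_log_Gamma_of_convexOn {ι : Type*} {l : Filter ι} {f : ι → ℝ → ℝ}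
    (hconv : ∀ᶠ i in l, ConvexOn ℝ (Ioi 0) (f i))
    (hdiff : ∀ y, 0 < y → Tendsto (fun i => Δ_[1] (f i) y) l (𝓝 (Real.log y)))
    {x : ℝ} (hx : 0 < x) :
    Tendsto (fun i => f i x - f i 1) l (𝓝 (Real.log (Real.Gamma x))) := by
  have hlower : Tendsto (eulerSeq Real.log x) atTop (𝓝 (Real.log (Real.Gamma x))) := by
    simpa only [funext (eulerSeq_log x)] using Real.BohrMollerup.tendsto_log_gamma hx
  have herror : Tendsto (fun n : ℕ => Real.log (n + 1 + x) - Real.log n) atTop (𝓝 0) := by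
    simpa only [Function.comp_def, add_assoc] using
      (Real.tendsto_log_comp_add_sub_log (1 + x)).comp tendsto_natCast_atTop_atTop
  have hupper : Tendsto
      (fun n : ℕ => eulerSeq Real.log x n + x * (Real.log (n + 1 + x) - Real.log n)) atTop
      (𝓝 (Real.log (Real.Gamma x))) := by
    simpa using hlower.add (herror.const_mul x)
  have hpos : ∀ᶠ n : ℕ in atTop, 0 < n := eventually_gt_atTop 0
  exact tendsto_of_eventually_tendsto_squeeze
    (hpos.mono fun n hn => tendsto_eulerSeq hdiff hx hn) hlower
    (hpos.mono fun n hn => (tendsto_eulerSeq hdiff hx hn).add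
      (((hdiff (n + 1 + x) (by positivity)).sub (hdiff n (by positivity))).const_mul x)) hupper
    (hpos.mono fun n hn => hconv.mono fun i hi => eulerSeq_fwdDiff_le hi hx hn)
    (.of_forall fun n => hconv.mono fun i hi => le_eulerSeq_fwdDiff_add hi hx)

end BohrMollerup

section QBracket

/-- The `q`-number `[w]_q = (1 - q^w) / (1 - q)`. -/
noncomputable def qBracket (q w : ℝ) : ℝ := (1 - q ^ w) / (1 - q)

theorem tendsto_qBracket (w : ℝ) : Tendsto (fun q => qBracket q w) (𝓝[≠] 1) (𝓝 w) := by
  have hderiv : HasDerivAt (fun q : ℝ => q ^ w) w 1 := by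
    simpa using Real.hasDerivAt_rpow_const (x := 1) (p := w) (Or.inl one_ne_zero)
  refine (hasDerivAt_iff_tendsto_slope.1 hderiv).congr fun q => ?_
  rw [slope_def_field, Real.one_rpow, qBracket, ← neg_sub, ← neg_sub (1 : ℝ) q, neg_div_neg_eq]

theorem tendsto_rpow_neg_mul_log_qBracket_sub {z : ℝ} (hz : z ≠ 0) :
    Tendsto (fun q : ℝ => q ^ (-z) * (Real.log (qBracket q z) - z * Real.log q)) (𝓝[≠] 1)
      (𝓝 (Real.log z)) := by
  have hrpow : Tendsto (fun q : ℝ => q ^ (-z)) (𝓝[≠] 1) (𝓝 1) := by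
    simpa using (Real.continuousAt_rpow_const 1 (-z) (Or.inl one_ne_zero)).tendsto.mono_left
      nhdsWithin_le_nhds
  have hlog : Tendsto Real.log (𝓝[≠] 1) (𝓝 0) := by
    simpa using (Real.continuousAt_log one_ne_zero).tendsto.mono_left nhdsWithin_le_nhds
  simpa using hrpow.mul (((tendsto_qBracket z).log hz).sub (hlog.const_mul z))

end QBracket

section QLogSeries

/-- The Lambert-type series `∑_{n=2}^∞ r^{n-1} / (n (1 - q^{n-1}))`, indexed from `n = 0`. The
series in `F_q(z)` is the difference of its values at `r = q^z` and at `r = q`. -/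
noncomputable def qLogSeries (q r : ℝ) : ℝ :=
  ∑' n : ℕ, r ^ (n + 1) / ((n + 2) * (1 - q ^ (n + 1)))

variable {q r : ℝ}

theorem summable_qLogSeries (hq : |q| < 1) (hr : |r| < 1) :
    Summable fun n : ℕ => r ^ (n + 1) / ((n + 2) * (1 - q ^ (n + 1))) := by
  have hgeom : Summable fun n : ℕ => |r| ^ (n + 1) / (1 - |q|) :=
    ((summable_nat_add_iff 1).2 (summable_geometric_of_lt_one (abs_nonneg r) hr)).div_const _
  refine hgeom.of_norm_bounded fun n => ?_
  have hgap : 1 - |q| ≤ |1 - q ^ (n + 1)| := by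
    have hpow : |q ^ (n + 1)| ≤ |q| := by
      rw [abs_pow]
      exact pow_le_of_le_one (abs_nonneg q) hq.le n.succ_ne_zero
    linarith [abs_sub_abs_le_abs_sub 1 (q ^ (n + 1)), abs_one (α := ℝ)]
  have hden : 1 - |q| ≤ |((n : ℝ) + 2) * (1 - q ^ (n + 1))| := by
    rw [abs_mul, abs_of_pos (by positivity : (0 : ℝ) < n + 2)]
    exact hgap.trans (le_mul_of_one_le_left (abs_nonneg _) (by linarith [n.cast_nonneg (α := ℝ)]))
  rw [Real.norm_eq_abs, abs_div, abs_pow]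
  exact div_le_div_of_nonneg_left (by positivity) (sub_pos.2 hq) hden

/-- Passing from `r` to `q r` cancels the factors `1 - q^{n+1}` and leaves a logarithm series. -/
theorem mul_qLogSeries_sub_qLogSeries_mul (hq : |q| < 1) (hr : |r| < 1) :
    r * (qLogSeries q r - qLogSeries q (q * r)) = -Real.log (1 - r) - r := by
  have hqr : |q * r| < 1 := by
    rw [abs_mul]
    exact mul_lt_one_of_nonneg_of_lt_one_left (abs_nonneg q) hq hr.le
  have hlog : HasSum (fun n : ℕ => r ^ (n + 2) / ((n : ℝ) + 2)) (-Real.log (1 - r) - r) := by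
    have h := (hasSum_nat_add_iff' 1).2 (Real.hasSum_pow_div_log_of_abs_lt_one hr)
    simpa [add_assoc, one_add_one_eq_two] using h
  rw [qLogSeries, qLogSeries, ← (summable_qLogSeries hq hr).tsum_sub (summable_qLogSeries hq hqr),
    ← tsum_mul_left, ← hlog.tsum_eq]
  refine tsum_congr fun n => ?_
  have hn : 1 - q ^ (n + 1) ≠ 0 := by
    have hpow : |q ^ (n + 1)| < 1 := by
      rw [abs_pow]
      exact pow_lt_one₀ (abs_nonneg q) hq n.succ_ne_zero
    exact (sub_pos.2 (abs_lt.1 hpow).2).ne'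
  have hn₂ : (n : ℝ) + 2 ≠ 0 := by positivity
  rw [mul_pow]
  field_simp
  ring

theorem abs_rpow_lt_one (hq_pos : 0 < q) (hq_lt : q < 1) {z : ℝ} (hz : 0 < z) : |q ^ z| < 1 := by
  rw [abs_of_pos (by positivity)]
  exact Real.rpow_lt_one hq_pos.le hq_lt hz

theorem convexOn_qLogSeries_rpow (hq_pos : 0 < q) (hq_lt : q < 1) :
    ConvexOn ℝ (Ioi 0) fun z : ℝ => qLogSeries q (q ^ z) := by
  have hq : |q| < 1 := by rwa [abs_of_pos hq_pos]
  refine convexOn_tsum (convex_Ioi 0) (fun n => ?_) fun z hz =>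
    summable_qLogSeries hq (abs_rpow_lt_one hq_pos hq_lt hz)
  have hweight : 0 ≤ (((n : ℝ) + 2) * (1 - q ^ (n + 1)))⁻¹ := by
    have := sub_pos.2 (pow_lt_one₀ hq_pos.le hq_lt n.succ_ne_zero)
    positivity
  refine (((convexOn_rpow_left (pow_pos hq_pos (n + 1))).subset (subset_univ _)
    (convex_Ioi 0)).smul hweight).congr fun z _ => ?_
  simp only [smul_eq_mul]
  rw [Real.rpow_pow_comm hq_pos.le, inv_mul_eq_div]

end QLogSeries

section LogGammaQ

variable {q : ℝ}

theorem Fq_one (hq : q ≠ 0) : Fq q 1 = 0 := by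
  simp [Fq, Real.rpow_neg_one, inv_mul_cancel₀ hq]

theorem Fq_eq_qLogSeries (hq_pos : 0 < q) (hq_lt : q < 1) {z : ℝ} (hz : 0 < z) :
    Fq q z = qLogSeries q (q ^ z) - qLogSeries q q - z + 1
      + (q⁻¹ ^ z * (1 - (1 - q) * z) - 1) / (1 - q) ^ 2 * q * Real.log q
      + (1 - q * q⁻¹ ^ z) / (1 - q) * Real.log (1 - q) := by
  have hq : |q| < 1 := by rwa [abs_of_pos hq_pos]
  have hqz : |q ^ z| < 1 := abs_rpow_lt_one hq_pos hq_lt hz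
  have hneg : q ^ (-z) = q⁻¹ ^ z := by rw [Real.rpow_neg hq_pos.le, Real.inv_rpow hq_pos.le]
  have hone_sub : q ^ (1 - z) = q * q⁻¹ ^ z := by
    rw [sub_eq_add_neg, Real.rpow_add hq_pos, Real.rpow_one, hneg]
  rw [Fq, hneg, hone_sub, qLogSeries, qLogSeries,
    ← (summable_qLogSeries hq hqz).tsum_sub (summable_qLogSeries hq hq)]
  congr 5 with n
  rw [← sub_div, ← Real.rpow_mul_natCast hq_pos.le, ← Real.rpow_natCast q, Nat.cast_succ, one_div,
    inv_mul_eq_div, div_div]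

theorem fwdDiff_Fq (hq_pos : 0 < q) (hq_lt : q < 1) {z : ℝ} (hz : 0 < z) :
    Δ_[1] (Fq q) z = q ^ (-z) * (Real.log (qBracket q z) - z * Real.log q) := by
  have hqz_pos : 0 < q ^ z := by positivity
  have hseries := mul_qLogSeries_sub_qLogSeries_mul (by rwa [abs_of_pos hq_pos])
    (abs_rpow_lt_one hq_pos hq_lt hz)
  have hq₁ : 1 - q ≠ 0 := (sub_pos.2 hq_lt).ne'
  have hlog : Real.log (qBracket q z) = Real.log (1 - q ^ z) - Real.log (1 - q) :=
    Real.log_div (sub_pos.2 (Real.rpow_lt_one hq_pos.le hq_lt hz)).ne' hq₁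
  rw [fwdDiff, Fq_eq_qLogSeries hq_pos hq_lt hz, Fq_eq_qLogSeries hq_pos hq_lt (add_pos hz one_pos),
    Real.inv_rpow hq_pos.le, Real.inv_rpow hq_pos.le, Real.rpow_neg hq_pos.le,
    Real.rpow_add_one hq_pos.ne', mul_comm _ q, hlog]
  generalize q ^ z = r at *
  have hshift : qLogSeries q (q * r) = qLogSeries q r + r⁻¹ * Real.log (1 - r) + 1 := by
    field_simp
    linarith
  rw [hshift]
  field_simp
  ring

theorem log_inv_le_two_mul_one_sub (hq_half : 1 / 2 ≤ q) (hq_le : q ≤ 1) :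
    Real.log q⁻¹ ≤ 2 * (1 - q) := by
  have hq_pos : 0 < q := by linarith
  calc Real.log q⁻¹ ≤ q⁻¹ - 1 := Real.log_le_sub_one_of_pos (inv_pos.2 hq_pos)
    _ = q⁻¹ * (1 - q) := by field_simp
    _ ≤ 2 * (1 - q) := by
      have : q⁻¹ ≤ 2 := inv_le_of_inv_le₀ two_pos (by linarith)
      gcongr

theorem convexOn_Fq (hq_half : 1 / 2 ≤ q) (hq_lt : q < 1) : ConvexOn ℝ (Ioi 0) (Fq q) := by
  have hq_pos : 0 < q := by linarith
  have hq₁ : 0 < 1 - q := sub_pos.2 hq_lt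
  have hcoeff₁ : 0 ≤ q * -Real.log q / (1 - q) ^ 2 := by
    have := Real.log_nonpos hq_pos.le hq_lt.le
    exact div_nonneg (mul_nonneg hq_pos.le (by linarith)) (sq_nonneg _)
  have hcoeff₂ : 0 ≤ q * -Real.log (1 - q) / (1 - q) := by
    have := Real.log_nonpos hq₁.le (by linarith)
    exact div_nonneg (mul_nonneg hq_pos.le (by linarith)) hq₁.le
  have haffine : ConvexOn ℝ (Ici 0) fun z : ℝ => q⁻¹ ^ z * ((1 - q) * z + -1) :=
    convexOn_const_rpow_mul_affine ((one_le_inv₀ hq_pos).2 hq_lt.le) hq₁.le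
      (by linarith [log_inv_le_two_mul_one_sub hq_half hq_lt.le])
  have hrpow : ConvexOn ℝ (Ioi 0) fun z : ℝ => q⁻¹ ^ z :=
    (convexOn_rpow_left (inv_pos.2 hq_pos)).subset (subset_univ _) (convex_Ioi 0)
  have hlinear : ConvexOn ℝ (Ioi 0) fun z : ℝ => -z := (concaveOn_id (convex_Ioi 0)).neg
  refine ((((convexOn_qLogSeries_rpow hq_pos hq_lt).add
    ((haffine.subset Ioi_subset_Ici_self (convex_Ioi 0)).smul hcoeff₁)).add
    (hrpow.smul hcoeff₂)).add (hlinear.add_const (-qLogSeries q q + 1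
      - q * Real.log q / (1 - q) ^ 2 + Real.log (1 - q) / (1 - q)))).congr fun z hz => ?_
  simp only [Pi.add_apply, smul_eq_mul, Fq_eq_qLogSeries hq_pos hq_lt hz]
  ring

end LogGammaQ

/-- For real `z > 0`: `lim_{q↑1} Γ̃_q(z) = Γ(z)`, the limit being over real `q`
increasing to `1` (within `(0,1)`), where `Γ` is the Euler gamma function. -/
theorem tendsto_GammaQ_Gamma (z : ℝ) (hz : 0 < z) :
    Filter.Tendsto (fun q : ℝ => GammaQ q z)
      (nhdsWithin 1 (Set.Ioo 0 1)) (nhds (Real.Gamma z)) := by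
  rw [nhdsWithin_Ioo_eq_nhdsLT zero_lt_one]
  have hmem : ∀ᶠ q : ℝ in 𝓝[<] 1, q ∈ Ioo (1 / 2) 1 := Ioo_mem_nhdsLT (by norm_num)
  have hconv : ∀ᶠ q in 𝓝[<] 1, ConvexOn ℝ (Ioi 0) (Fq q) :=
    hmem.mono fun q hq => convexOn_Fq hq.1.le hq.2
  have hdiff (y : ℝ) (hy : 0 < y) : Tendsto (fun q => Δ_[1] (Fq q) y) (𝓝[<] 1) (𝓝 (Real.log y)) :=
    ((tendsto_rpow_neg_mul_log_qBracket_sub hy.ne').mono_left (nhdsLT_le_nhdsNE 1)).congr'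
      (hmem.mono fun q hq => (fwdDiff_Fq (one_half_pos.trans hq.1) hq.2 hy).symm)
  have hlog : Tendsto (fun q => Fq q z) (𝓝[<] 1) (𝓝 (Real.log (Real.Gamma z))) :=
    (tendsto_sub_log_Gamma_of_convexOn hconv hdiff hz).congr'
      (hmem.mono fun q hq => by rw [Fq_one (one_half_pos.trans hq.1).ne', sub_zero])
  rw [← Real.exp_log (Real.Gamma_pos_of_pos hz)]
  exact (Real.continuous_exp.tendsto _).comp hlog
end
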